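/- Let K be an algebraically closed field, let n >= 1, and let r be a symmetric rank table. Then J^ss_r is the intersection of the ideals J^ss_z over all z in FPF_n(I_n) that are minimal in the Bruhat order on I^FPF_infty among the elements z of FPF_n(I_n) satisfying r_z(i,j) <= r(i,j) for all i,j in [n]. -/

import Mathlib

namespace Paper

/-!
We model a permutation of the positive integers `{1, 2, 3, ...}` as an `Equiv.Perm ℕ`
that fixes `0`; all notions below refer only to positive inputs.
-/

/-- The rank `r_w(i,j) = #{a ∈ [i] : w(a) ∈ [j]}` of the `i × j` partial
permutation matrix of `w`, where `[k] = {1, ..., k}`. -/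
def rnk (w : Equiv.Perm ℕ) (i j : ℕ) : ℕ :=
  ((Finset.Icc 1 i).filter fun a => w a ∈ Finset.Icc 1 j).card

/-- Right descent set `Des_R(w) = {i ≥ 1 : w(i) > w(i+1)}`. -/
def DesR (w : Equiv.Perm ℕ) : Set ℕ := {i | 1 ≤ i ∧ w (i + 1) < w i}

/-- Left descent set `Des_L(w) = Des_R(w⁻¹)`. -/
def DesL (w : Equiv.Perm ℕ) : Set ℕ := DesR w⁻¹

/-- `S_∞`: permutations of the positive integers fixing all but finitely many points. -/
def SInfty : Set (Equiv.Perm ℕ) :=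
  {w | w 0 = 0 ∧ Set.Finite {i : ℕ | w i ≠ i}}

/-- `S^{m,n}_∞ = {w ∈ S_∞ : Des_R(w) ⊆ [m], Des_L(w) ⊆ [n]}`. -/
def SmnInfty (m n : ℕ) : Set (Equiv.Perm ℕ) :=
  {w | w ∈ SInfty ∧ DesR w ⊆ Set.Icc 1 m ∧ DesL w ⊆ Set.Icc 1 n}

/-- The Rothe diagram `D(w) = {(i,j) : 0 < j < w(i), 0 < i < w⁻¹(j)}`. -/
def Rothe (w : Equiv.Perm ℕ) : Set (ℕ × ℕ) :=
  {p | 0 < p.2 ∧ p.2 < w p.1 ∧ 0 < p.1 ∧ p.1 < w⁻¹ p.2}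

/-- The function `1_FPF`, sending `i ↦ i - (-1)^i` on positive integers (it fixes `0`). -/
def oneFPF : ℕ → ℕ := fun i => if i % 2 = 1 then i + 1 else i - 1

/-- `I^FPF_∞`: fixed-point-free involutions of the positive integers agreeing with
`1_FPF` at all sufficiently large inputs. -/
def IFPFInfty : Set (Equiv.Perm ℕ) :=
  {z | z 0 = 0 ∧ (∀ i, 1 ≤ i → z i ≠ i) ∧ z * z = 1 ∧ ∃ N, ∀ i, N ≤ i → z i = oneFPF i}

/-- The skew-symmetric Rothe diagram `D^ss(z) = {(i,j) : 0 < j < z(i), j < i < z(j)}`. -/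
def Dss (z : Equiv.Perm ℕ) : Set (ℕ × ℕ) :=
  {p | 0 < p.2 ∧ p.2 < z p.1 ∧ p.2 < p.1 ∧ p.1 < z p.2}

/-- `FPF_n(I_n) = {z ∈ I^FPF_∞ : D^ss(z) ⊆ [n] × [n]}`. -/
def FPFIn (n : ℕ) : Set (Equiv.Perm ℕ) :=
  {z | z ∈ IFPFInfty ∧ Dss z ⊆ Set.Icc 1 n ×ˢ Set.Icc 1 n}

/-- `ℓ_fpf(z) = |D^ss(z)|`. -/
noncomputable def ellFpf (z : Equiv.Perm ℕ) : ℕ := (Dss z).ncard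

/-- Bruhat order on `I^FPF_∞`: reflexive-transitive closure of `z < (i,j) z (i,j)`
whenever `i < j` and `ℓ_fpf` goes up by exactly one. -/
def fpfBruhatLe (z y : Equiv.Perm ℕ) : Prop :=
  Relation.ReflTransGen
    (fun a b => ∃ i j : ℕ, 1 ≤ i ∧ i < j ∧
      b = Equiv.swap i j * a * Equiv.swap i j ∧ ellFpf b = ellFpf a + 1) z y

/-- `i` is a visible descent of `z` if `i ≥ 1` and `z(i+1) < min(i, z(i))`. -/
def visibleDescent (z : Equiv.Perm ℕ) (i : ℕ) : Prop :=
  1 ≤ i ∧ z (i + 1) < min i (z i)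

/-- `Ψ(z, p) = {(p,r) z (p,r) : r > p, ℓ_fpf((p,r) z (p,r)) = ℓ_fpf(z) + 1}`. -/
def PsiSet (z : Equiv.Perm ℕ) (p : ℕ) : Set (Equiv.Perm ℕ) :=
  {y | ∃ r : ℕ, p < r ∧ y = Equiv.swap p r * z * Equiv.swap p r ∧ ellFpf y = ellFpf z + 1}

/-- The dominant component `dom(z) = {(i,j) : i, j ≥ 1, r_z(i,j) = 0}`. -/
def domSet (z : Equiv.Perm ℕ) : Set (ℕ × ℕ) :=
  {p | 1 ≤ p.1 ∧ 1 ≤ p.2 ∧ rnk z p.1 p.2 = 0}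

/-- `(p, q)` is an outer corner of `dom(z)`. -/
def IsOuterCorner (z : Equiv.Perm ℕ) (p q : ℕ) : Prop :=
  1 ≤ p ∧ 1 ≤ q ∧ (p, q) ∉ domSet z ∧
    (p = 1 ∨ (p - 1, q) ∈ domSet z) ∧ (q = 1 ∨ (p, q - 1) ∈ domSet z)

/-- `I_n`: involutions in `S_∞` fixing every `i > n`. -/
def InvolIn (n : ℕ) : Set (Equiv.Perm ℕ) :=
  {w | w 0 = 0 ∧ w * w = 1 ∧ ∀ i, n < i → w i = i}

/-- The fixed points of `z` lying in `[n]`. -/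
def fixedPtsIn (n : ℕ) (z : Equiv.Perm ℕ) : Finset ℕ :=
  (Finset.Icc 1 n).filter fun i => z i = i

/-- The function swapping `m + 2t - 1` and `m + 2t` for every `t ≥ 1`, fixing all other points. -/
def tailSwapFun (m : ℕ) : ℕ → ℕ := fun i =>
  if i ≤ m then i else if (i - m) % 2 = 1 then i + 1 else i - 1

theorem tailSwapFun_involutive (m : ℕ) : Function.Involutive (tailSwapFun m) := by
  intro i
  unfold tailSwapFun
  split_ifs <;> omega

/-- The involution swapping `m + 2t - 1` and `m + 2t` for every `t ≥ 1`. -/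
def tailSwap (m : ℕ) : Equiv.Perm ℕ :=
  Function.Involutive.toPerm _ (tailSwapFun_involutive m)

/-- The fixed-point-free standardization `FPF_n(z) = z ⋅ (i_1,n+1)⋯(i_k,n+k) ⋅ c`,
where `i_1 < ⋯ < i_k` are the fixed points of `z` in `[n]` and `c` swaps
`n+k+2t-1, n+k+2t` for all `t ≥ 1`. -/
noncomputable def fpfStd (n : ℕ) (z : Equiv.Perm ℕ) : Equiv.Perm ℕ :=
  z *
    (List.ofFn fun t : Fin (fixedPtsIn n z).card =>
      Equiv.swap ((fixedPtsIn n z).orderEmbOfFin rfl t) (n + (t : ℕ) + 1)).prod *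
    tailSwap (n + (fixedPtsIn n z).card)

/-- `Mat^ss_n(K)`: skew-symmetric `n × n` matrices (transpose is the negative, zero diagonal).
Row/column index `a : Fin n` corresponds to the (1-indexed) row/column `a + 1`. -/
def MatSS (K : Type*) [CommRing K] (n : ℕ) : Set (Matrix (Fin n) (Fin n) K) :=
  {A | A.transpose = -A ∧ ∀ i, A i i = 0}

/-- The skew-symmetric matrix Schubert variety
`X^ss_z = {A ∈ Mat^ss_n : rank A_{[i][j]} ≤ r_z(i,j) for all i, j ∈ [n]}`. -/
noncomputable def Xss (K : Type*) [Field K] (n : ℕ) (z : Equiv.Perm ℕ) :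
    Set (Matrix (Fin n) (Fin n) K) :=
  {A | A ∈ MatSS K n ∧ ∀ (i j : ℕ) (hi : i ≤ n) (hj : j ≤ n), 1 ≤ i → 1 ≤ j →
    (A.submatrix (Fin.castLE hi) (Fin.castLE hj)).rank ≤ rnk z i j}

/-- `#{(i,j) : i > j, j < z(i), i < z(j)}` for a permutation of `Fin N`
(the `0`-indexed version of `ℓ_fpf`). -/
def ellFpfFin {N : ℕ} (z : Equiv.Perm (Fin N)) : ℕ :=
  (Finset.univ.filter fun p : Fin N × Fin N => p.2 < p.1 ∧ p.2 < z p.1 ∧ p.1 < z p.2).card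

/-- The Pfaffian of an `N × N` matrix:
`pf(A) = ∑_{z fpf involution of [N]} (-1)^{ℓ_fpf(z)} ∏_{z(i) < i} A_{z(i), i}`.
(The sum is empty, hence `0`, when `N` is odd.) -/
noncomputable def Pfaffian {R : Type*} [CommRing R] {N : ℕ} (A : Matrix (Fin N) (Fin N) R) : R :=
  ∑ z ∈ Finset.univ.filter (fun z : Equiv.Perm (Fin N) => (∀ i, z i ≠ i) ∧ ∀ i, z (z i) = i),
    (-1 : R) ^ ellFpfFin z * ∏ i ∈ Finset.univ.filter (fun i : Fin N => z i < i), A (z i) i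

/-- Index set for the variables `u_{ij}`, `n ≥ i > j ≥ 1`, of the coordinate ring
`R_n = K[Mat^ss_n]`; the variable `⟨(a, b), _⟩` is `u_{a+1, b+1}`. -/
abbrev SSVar (n : ℕ) : Type := {p : Fin n × Fin n // p.2 < p.1}

/-- The generic skew-symmetric matrix `U^ss` over `R_n`. -/
noncomputable def Uss (K : Type*) [CommRing K] (n : ℕ) :
    Matrix (Fin n) (Fin n) (MvPolynomial (SSVar n) K) :=
  Matrix.of fun i j =>
    if h : j < i then MvPolynomial.X ⟨(i, j), h⟩
    else if h' : i < j then -MvPolynomial.X ⟨(j, i), h'⟩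
    else 0

/-- The ideal of polynomials vanishing on a set `X`, where a point `A` is evaluated
via `ev A : σ → K`. -/
noncomputable def vanishingIdeal {K : Type*} [CommRing K] {σ M : Type*}
    (X : Set M) (ev : M → σ → K) : Ideal (MvPolynomial σ K) where
  carrier := {f | ∀ A ∈ X, MvPolynomial.eval (ev A) f = 0}
  zero_mem' := by simp
  add_mem' := by
    intro f g hf hg
    simp only [Set.mem_setOf_eq] at *
    intro A hA
    rw [map_add, hf A hA, hg A hA, add_zero]
  smul_mem' := by
    intro c f hf
    simp only [Set.mem_setOf_eq] at *
    intro A hA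
    rw [smul_eq_mul, map_mul, hf A hA, mul_zero]

/-- `I(X^ss_z) ⊆ R_n`, where `u_{ij}` is evaluated at `A` as `A_{ij}`. -/
noncomputable def IXss (K : Type*) [Field K] (n : ℕ) (z : Equiv.Perm ℕ) :
    Ideal (MvPolynomial (SSVar n) K) :=
  vanishingIdeal (Xss K n z) fun A v => A v.1.1 v.1.2

/-- `pf(U^ss_{RR})` for a finite row/column set `R` (listed in increasing order). -/
noncomputable def pfUss (K : Type*) [CommRing K] {n : ℕ} (R : Finset (Fin n)) :
    MvPolynomial (SSVar n) K :=
  Pfaffian ((Uss K n).submatrix (fun s => R.orderEmbOfFin rfl s) fun t => R.orderEmbOfFin rfl t)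

/-- The ideal `I^ss_z`, generated by the Pfaffians `pf(U^ss_{RR})` over all nonempty
even-size `R ⊆ [n]` such that `R ⊆ [i]` and `|R ∩ [j]| > r_z(i,j)` for some `i ≥ j`. -/
noncomputable def IssIdeal (K : Type*) [Field K] (n : ℕ) (z : Equiv.Perm ℕ) :
    Ideal (MvPolynomial (SSVar n) K) :=
  Ideal.span {f : MvPolynomial (SSVar n) K | ∃ R : Finset (Fin n),
    R.Nonempty ∧ Even R.card ∧
    (∃ i j : ℕ, 1 ≤ j ∧ j ≤ i ∧ i ≤ n ∧ (∀ a ∈ R, (a : ℕ) + 1 ≤ i) ∧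
      rnk z i j < (R.filter fun a : Fin n => (a : ℕ) + 1 ≤ j).card) ∧
    f = pfUss K R}

/-- The square-free monomial `u^ss_{AB}`: zero if `A ⊙ B` meets the diagonal, and otherwise
the product of the variables `u_{ij}` over the pairs `i > j` with `(i,j)` or `(j,i)` in
`A ⊙ B = {(a_0, b_r), (a_1, b_{r-1}), ..., (a_r, b_0)}`. -/
noncomputable def ussMon (K : Type*) [CommRing K] {n : ℕ} (A B : Finset (Fin n)) :
    MvPolynomial (SSVar n) K :=
  if h : A.card = B.card then
    if ∃ t : Fin A.card, (A.orderEmbOfFin rfl t : Fin n) = B.orderEmbOfFin h.symm t.rev then 0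
    else
      ∏ v ∈ Finset.univ.filter (fun v : SSVar n => ∃ t : Fin A.card,
          (A.orderEmbOfFin rfl t = v.1.1 ∧ B.orderEmbOfFin h.symm t.rev = v.1.2) ∨
          (A.orderEmbOfFin rfl t = v.1.2 ∧ B.orderEmbOfFin h.symm t.rev = v.1.1)),
        MvPolynomial.X v
  else 0

/-- The monomial ideal `J^ss_r` of a symmetric rank table `r`, generated by the monomials
`u^ss_{AB}` with `A ⊆ [i]`, `B ⊆ [j]`, `|A| = |B| = r(i,j) + 1` for some `n ≥ i ≥ j ≥ 1`. -/
noncomputable def JssIdealOfTable (K : Type*) [CommRing K] (n : ℕ) (r : ℕ → ℕ → ℕ) :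
    Ideal (MvPolynomial (SSVar n) K) :=
  Ideal.span {g : MvPolynomial (SSVar n) K | ∃ (i j : ℕ) (A B : Finset (Fin n)),
    1 ≤ j ∧ j ≤ i ∧ i ≤ n ∧
    (∀ a ∈ A, (a : ℕ) + 1 ≤ i) ∧ (∀ b ∈ B, (b : ℕ) + 1 ≤ j) ∧
    A.card = r i j + 1 ∧ B.card = r i j + 1 ∧ g = ussMon K A B}

/-- `J^ss_z = J^ss_{r_z}`. -/
noncomputable def JssIdeal (K : Type*) [CommRing K] (n : ℕ) (z : Equiv.Perm ℕ) :
    Ideal (MvPolynomial (SSVar n) K) :=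
  JssIdealOfTable K n (rnk z)

/-- Total degree of a monomial (exponent vector). -/
def totalDeg {σ : Type*} (m : σ →₀ ℕ) : ℕ := m.sum fun _ e => e

/-- The lexicographic order on the variables `u_{ij}` by the pair `(i, j)`. -/
def varLT {n : ℕ} (v w : SSVar n) : Prop :=
  v.1.1 < w.1.1 ∨ (v.1.1 = w.1.1 ∧ v.1.2 < w.1.2)

/-- The (graded) reverse lexicographic term order on monomials of `R_n`:
`m₁ < m₂` iff `deg m₁ < deg m₂`, or the degrees agree and the lexicographically largest
variable with different exponents has strictly larger exponent in `m₁`. -/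
def revlexLT {n : ℕ} (m₁ m₂ : SSVar n →₀ ℕ) : Prop :=
  totalDeg m₁ < totalDeg m₂ ∨
    (totalDeg m₁ = totalDeg m₂ ∧ ∃ v, m₂ v < m₁ v ∧ ∀ w, varLT v w → m₁ w = m₂ w)

/-- The initial ideal of `I` with respect to a strict term order `lt`: the ideal
generated by the leading monomials `init(f)` of the nonzero `f ∈ I`. -/
noncomputable def initIdeal {K : Type*} [CommRing K] {σ : Type*}
    (lt : (σ →₀ ℕ) → (σ →₀ ℕ) → Prop) (I : Ideal (MvPolynomial σ K)) :
    Ideal (MvPolynomial σ K) :=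
  Ideal.span {g : MvPolynomial σ K | ∃ f ∈ I, f ≠ 0 ∧ ∃ m : σ →₀ ℕ, m ∈ f.support ∧
    (∀ m' ∈ f.support, m' ≠ m → lt m' m) ∧ g = MvPolynomial.monomial m (1 : K)}

/-- A term order on the monomials of a polynomial ring: a linear order in which `1` is
the unique minimum and multiplication by a fixed monomial preserves order. -/
structure TermOrder (σ : Type*) where
  le : (σ →₀ ℕ) → (σ →₀ ℕ) → Prop
  trans : ∀ a b c, le a b → le b c → le a c
  antisymm : ∀ a b, le a b → le b a → a = b
  total : ∀ a b, le a b ∨ le b a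
  zero_le : ∀ a, le 0 a
  add_le_add_right : ∀ a b c, le a b → le (a + c) (b + c)

/-- The initial ideal of `I` with respect to a term order `τ`. -/
noncomputable def initIdealLe {K : Type*} [CommRing K] {σ : Type*}
    (τ : TermOrder σ) (I : Ideal (MvPolynomial σ K)) : Ideal (MvPolynomial σ K) :=
  Ideal.span {g : MvPolynomial σ K | ∃ f ∈ I, f ≠ 0 ∧ ∃ m : σ →₀ ℕ, m ∈ f.support ∧
    (∀ m' ∈ f.support, τ.le m' m) ∧ g = MvPolynomial.monomial m (1 : K)}

/-- An ideal is homogeneous (w.r.t. total degree) iff it contains all homogeneous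
components of its elements. -/
def IsHomogIdeal {K : Type*} [CommSemiring K] {σ : Type*}
    (I : Ideal (MvPolynomial σ K)) : Prop :=
  ∀ f ∈ I, ∀ d : ℕ, MvPolynomial.homogeneousComponent d f ∈ I

/-- The reading order on boxes: rows top to bottom, each row right to left. -/
def pdRel (p q : ℕ × ℕ) : Prop := p.1 < q.1 ∨ (p.1 = q.1 ∧ q.2 ≤ p.2)

instance : DecidableRel pdRel := fun p q => by unfold pdRel; infer_instance

instance : IsTrans (ℕ × ℕ) pdRel :=
  ⟨fun a b c hab hbc => by unfold pdRel at *; omega⟩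

instance : IsAntisymm (ℕ × ℕ) pdRel :=
  ⟨fun a b hab hba => by
    unfold pdRel at hab hba
    exact Prod.ext_iff.mpr ⟨by omega, by omega⟩⟩

instance : IsTotal (ℕ × ℕ) pdRel :=
  ⟨fun a b => by unfold pdRel; omega⟩

/-- The pipe dream reading word of a finite set `D` of boxes: the letters `i + j - 1`
over `(i, j) ∈ D`, in the order making `(i, -j)` increase lexicographically. -/
def pdWord (D : Finset (ℕ × ℕ)) : List ℕ :=
  (D.sort pdRel).map fun p => p.1 + p.2 - 1

/-- The product `s_{i_1} s_{i_2} ⋯ s_{i_l}` of simple transpositions. -/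
def wordProd (l : List ℕ) : Equiv.Perm ℕ :=
  (l.map fun i => Equiv.swap i (i + 1)).prod

/-- `l` is a reduced word for `w`: a minimal-length word of positive letters whose
product of simple transpositions is `w`. -/
def IsReducedWordOf (w : Equiv.Perm ℕ) (l : List ℕ) : Prop :=
  (∀ a ∈ l, 1 ≤ a) ∧ wordProd l = w ∧
    ∀ l' : List ℕ, (∀ a ∈ l', 1 ≤ a) → wordProd l' = w → l.length ≤ l'.length

/-- The set `RP(w)` of reduced pipe dreams for `w`. -/
def RP (w : Equiv.Perm ℕ) : Set (Finset (ℕ × ℕ)) :=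
  {D | (∀ p ∈ D, 1 ≤ p.1 ∧ 1 ≤ p.2) ∧ IsReducedWordOf w (pdWord D)}

/-- `I^FPF_m`: involutions in `S_∞` that are fixed-point-free on `[m]` and fix
all `i > m`. -/
def IFPFm (m : ℕ) : Set (Equiv.Perm ℕ) :=
  {y | y 0 = 0 ∧ y * y = 1 ∧ (∀ i, 1 ≤ i → i ≤ m → y i ≠ i) ∧ ∀ i, m < i → y i = i}

/-- `z = FPF_m(y)`: `z` agrees with `y` on `[m]` and swaps `m + 2k - 1, m + 2k`
for all `k ≥ 1`. -/
def IsFPFStdOf (m : ℕ) (y z : Equiv.Perm ℕ) : Prop :=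
  (∀ i, i ≤ m → z i = y i) ∧
    ∀ k : ℕ, z (m + 2 * k + 1) = m + 2 * k + 2 ∧ z (m + 2 * k + 2) = m + 2 * k + 1

/-- The set `FP(z)` of fpf-involution pipe dreams for `z ∈ I^FPF_∞`. -/
def FP (z : Equiv.Perm ℕ) : Set (Finset (ℕ × ℕ)) :=
  {E | ∃ (m : ℕ) (y : Equiv.Perm ℕ) (D : Finset (ℕ × ℕ)), Even m ∧ y ∈ IFPFm m ∧
    IsFPFStdOf m y z ∧ D ∈ RP y ∧ D.image Prod.swap = D ∧
    E = D.filter fun p => p.2 < p.1}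

/-- The minor `det(U_{AB})` of the generic `m × n` matrix `U`, with rows `A` and
columns `B` listed in increasing order. -/
noncomputable def genMinor (K : Type*) [CommRing K] {m n : ℕ}
    (A : Finset (Fin m)) (B : Finset (Fin n)) (h : A.card = B.card) :
    MvPolynomial (Fin m × Fin n) K :=
  (Matrix.of fun s t : Fin A.card =>
    (MvPolynomial.X (A.orderEmbOfFin rfl s, B.orderEmbOfFin h.symm t) :
      MvPolynomial (Fin m × Fin n) K)).det

/-- The antidiagonal monomial `u_{AB} = ∏_{(a,b) ∈ A ⊙ B} u_{ab}`. -/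
noncomputable def genMon (K : Type*) [CommRing K] {m n : ℕ}
    (A : Finset (Fin m)) (B : Finset (Fin n)) (h : A.card = B.card) :
    MvPolynomial (Fin m × Fin n) K :=
  ∏ t : Fin A.card, MvPolynomial.X (A.orderEmbOfFin rfl t, B.orderEmbOfFin h.symm t.rev)

/-- The exponent vector of the antidiagonal monomial `u_{AB}`. -/
noncomputable def antidiagExp {m n : ℕ} (A : Finset (Fin m)) (B : Finset (Fin n))
    (h : A.card = B.card) : (Fin m × Fin n) →₀ ℕ :=
  ∑ t : Fin A.card, Finsupp.single (A.orderEmbOfFin rfl t, B.orderEmbOfFin h.symm t.rev) 1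

/-- The ideal `I_w`, generated by the minors `det(U_{AB})` with `A ⊆ [i]`, `B ⊆ [j]`,
`|A| = |B| = r_w(i,j) + 1` for some `(i,j) ∈ [m] × [n]`. -/
noncomputable def IwIdeal (K : Type*) [Field K] (m n : ℕ) (w : Equiv.Perm ℕ) :
    Ideal (MvPolynomial (Fin m × Fin n) K) :=
  Ideal.span {g : MvPolynomial (Fin m × Fin n) K |
    ∃ (i j : ℕ) (A : Finset (Fin m)) (B : Finset (Fin n)) (h : A.card = B.card),
      1 ≤ i ∧ i ≤ m ∧ 1 ≤ j ∧ j ≤ n ∧ (∀ a ∈ A, (a : ℕ) + 1 ≤ i) ∧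
      (∀ b ∈ B, (b : ℕ) + 1 ≤ j) ∧ A.card = rnk w i j + 1 ∧ g = genMinor K A B h}

/-- The monomial ideal `J_w`, generated by the monomials `u_{AB}` with `A ⊆ [i]`,
`B ⊆ [j]`, `|A| = |B| = r_w(i,j) + 1` for some `(i,j) ∈ [m] × [n]`. -/
noncomputable def JwIdeal (K : Type*) [Field K] (m n : ℕ) (w : Equiv.Perm ℕ) :
    Ideal (MvPolynomial (Fin m × Fin n) K) :=
  Ideal.span {g : MvPolynomial (Fin m × Fin n) K |
    ∃ (i j : ℕ) (A : Finset (Fin m)) (B : Finset (Fin n)) (h : A.card = B.card),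
      1 ≤ i ∧ i ≤ m ∧ 1 ≤ j ∧ j ≤ n ∧ (∀ a ∈ A, (a : ℕ) + 1 ≤ i) ∧
      (∀ b ∈ B, (b : ℕ) + 1 ≤ j) ∧ A.card = rnk w i j + 1 ∧ g = genMon K A B h}

/-- The matrix Schubert variety
`X_w = {A ∈ Mat_{m×n} : rank A_{[i][j]} ≤ r_w(i,j) for all (i,j) ∈ [m] × [n]}`. -/
noncomputable def Xw (K : Type*) [Field K] (m n : ℕ) (w : Equiv.Perm ℕ) :
    Set (Matrix (Fin m) (Fin n) K) :=
  {A | ∀ (i j : ℕ) (hi : i ≤ m) (hj : j ≤ n), 1 ≤ i → 1 ≤ j →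
    (A.submatrix (Fin.castLE hi) (Fin.castLE hj)).rank ≤ rnk w i j}

/-- `I(X_w)`: the ideal of polynomials vanishing on `X_w`. -/
noncomputable def IXw (K : Type*) [Field K] (m n : ℕ) (w : Equiv.Perm ℕ) :
    Ideal (MvPolynomial (Fin m × Fin n) K) :=
  vanishingIdeal (Xw K m n w) fun A v => A v.1 v.2

/-- The variable `u_{pq}` (with `1 ≤ q < p ≤ n`) of `R_n`. -/
def ssvar {n : ℕ} (p q : ℕ) (hp : p ≤ n) (hq : 1 ≤ q) (hqp : q < p) : SSVar n :=
  ⟨(⟨p - 1, by omega⟩, ⟨q - 1, by omega⟩), Fin.mk_lt_mk.mpr (by omega)⟩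

/-- Index set for the variables `u_{ij}`, `i > j ≥ 1`, over all positive integers. -/
abbrev PVar : Type := {p : ℕ × ℕ // 1 ≤ p.2 ∧ p.2 < p.1}

/-- The generic skew-symmetric array `U^ss` over the positive integers:
`u_{xy}` if `x > y`, `-u_{yx}` if `x < y`, `0` if `x = y`. -/
noncomputable def UssP (K : Type*) [CommRing K] (x y : ℕ) : MvPolynomial PVar K :=
  if h : 1 ≤ y ∧ y < x then MvPolynomial.X ⟨(x, y), h⟩
  else if h' : 1 ≤ x ∧ x < y then -MvPolynomial.X ⟨(y, x), h'⟩
  else 0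

/-- `pf(U^ss_{RR})` for a finite set `R` of positive integers. -/
noncomputable def pfUssP (K : Type*) [CommRing K] (R : Finset ℕ) : MvPolynomial PVar K :=
  Pfaffian (Matrix.of fun s t : Fin R.card =>
    UssP K (R.orderEmbOfFin rfl s) (R.orderEmbOfFin rfl t))

/-- `g_{AB}`: the Pfaffian of the `(|B|+|A|) × (|B|+|A|)` skew-symmetric matrix whose
rows and columns are labeled by `B` (increasing) followed by `A` (increasing), with
entry `U^ss_{xy}` at a position labeled `(x, y)`, except that the entry is `0` when
both labels come from the `A`-block. -/
noncomputable def gAB (K : Type*) [CommRing K] (A B : Finset ℕ) : MvPolynomial PVar K :=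
  Pfaffian ((Matrix.of fun p q : Fin B.card ⊕ Fin A.card =>
      match p, q with
      | Sum.inl s, Sum.inl t => UssP K (B.orderEmbOfFin rfl s) (B.orderEmbOfFin rfl t)
      | Sum.inl s, Sum.inr t => UssP K (B.orderEmbOfFin rfl s) (A.orderEmbOfFin rfl t)
      | Sum.inr s, Sum.inl t => UssP K (A.orderEmbOfFin rfl s) (B.orderEmbOfFin rfl t)
      | Sum.inr _, Sum.inr _ => (0 : MvPolynomial PVar K)).submatrix
    finSumFinEquiv.symm finSumFinEquiv.symm)

/-- The exponent of the sign `⟨T, S⟩ = (-1)^{|S||T| + C(|S|,2) + ∑ of the (1-indexed)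
positions in the increasing enumeration of `T` occupied by elements of `S`}`. -/
def setSgnExp (T S : Finset ℕ) : ℕ :=
  S.card * T.card + Nat.choose S.card 2 +
    ∑ t : Fin T.card, if T.orderEmbOfFin rfl t ∈ S then (t : ℕ) + 1 else 0


/-- strict NE-SW chains of length `k` in `S` inside `[i] x [j]`. -/
def SChain (S : ℕ → ℕ → Prop) (i j k : ℕ) : Prop :=
  ∃ a b : ℕ → ℕ, (∀ s, s < k → S (a s) (b s) ∧ 1 ≤ a s ∧ 1 ≤ b s ∧ a s ≤ i ∧ b s ≤ j) ∧
    ∀ s, s + 1 < k → a s < a (s + 1) ∧ b (s + 1) < b s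

theorem chain_pair {a b : ℕ → ℕ} {k : ℕ}
    (h : ∀ s, s + 1 < k → a s < a (s + 1) ∧ b (s + 1) < b s) :
    ∀ t s, s < t → t < k → a s < a t ∧ b t < b s := by
  intro t
  induction t with
  | zero => intro s hs; omega
  | succ t ih =>
    intro s hs ht
    have h1 := h t ht
    rcases Nat.lt_or_ge s t with h2 | h2
    · have := ih s h2 (by omega); omega
    · have : s = t := by omega
      subst this; exact h1

theorem SChain.mono {S : ℕ → ℕ → Prop} {i j k i' j' k' : ℕ} (h : SChain S i j k)
    (hi : i ≤ i') (hj : j ≤ j') (hk : k' ≤ k) : SChain S i' j' k' := by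
  obtain ⟨a, b, h1, h2⟩ := h
  refine ⟨a, b, fun s hs => ?_, fun s hs => h2 s (by omega)⟩
  have := h1 s (by omega)
  refine ⟨this.1, ?_⟩
  omega

theorem SChain.zero (S : ℕ → ℕ → Prop) (i j : ℕ) : SChain S i j 0 :=
  ⟨id, id, fun s hs => by omega, fun s hs => by omega⟩

theorem SChain.dropRow {S : ℕ → ℕ → Prop} {i j k : ℕ} (h : SChain S (i + 1) j (k + 1)) :
    SChain S i j k := by
  obtain ⟨a, b, h1, h2⟩ := h
  refine ⟨a, b, fun s hs => ?_, fun s hs => h2 s (by omega)⟩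
  have h3 := h1 s (by omega)
  have h4 := chain_pair h2 k s hs (by omega)
  have h5 := h1 k (by omega)
  refine ⟨h3.1, ?_⟩
  omega

theorem SChain.symm {S : ℕ → ℕ → Prop} (hS : ∀ x y, S x y → S y x) {i j k : ℕ}
    (h : SChain S i j k) : SChain S j i k := by
  obtain ⟨a, b, h1, h2⟩ := h
  refine ⟨fun s => b (k - 1 - s), fun s => a (k - 1 - s), fun s hs => ?_, fun s hs => ?_⟩
  · have h3 := h1 (k - 1 - s) (by omega)
    refine ⟨hS _ _ h3.1, ?_⟩
    dsimp only
    omega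
  · have h3 := chain_pair h2 (k - 1 - s) (k - 1 - (s + 1)) (by omega) (by omega)
    exact ⟨h3.2, h3.1⟩

theorem SChain.le {S : ℕ → ℕ → Prop} {i j k : ℕ} (h : SChain S i j k) : k ≤ i := by
  induction k generalizing i with
  | zero => omega
  | succ k ih =>
    cases i with
    | zero =>
      obtain ⟨a, b, h1, h2⟩ := h
      have := h1 0 (by omega)
      omega
    | succ i => have := ih h.dropRow; omega

theorem SChain.key {S : ℕ → ℕ → Prop} {i j k : ℕ} (hP : SChain S i (j + 1) (k + 1))
    (hQ : SChain S (i + 1) j (k + 1)) (hn : ¬ SChain S i j (k + 1)) :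
    SChain S (i + 1) (j + 1) (k + 2) := by
  obtain ⟨a, b, p1, p2⟩ := hP
  obtain ⟨c, d, q1, q2⟩ := hQ
  have p3 := chain_pair p2
  have q3 := chain_pair q2
  have hb0 : j < b 0 := by
    by_contra hcon
    refine hn ⟨a, b, fun s hs => ?_, p2⟩
    have h1 := p1 s hs
    refine ⟨h1.1, ?_⟩
    rcases Nat.eq_zero_or_pos s with h | h
    · subst h; omega
    · have := p3 s 0 h hs; omega
  have hck : i < c k := by
    by_contra hcon
    refine hn ⟨c, d, fun s hs => ?_, q2⟩
    have h1 := q1 s hs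
    refine ⟨h1.1, ?_⟩
    rcases Nat.lt_or_ge s k with h | h
    · have := q3 k s h (by omega); omega
    · have : s = k := by omega
      subst this; omega
  by_contra hcon
  have up : ∀ s, s ≤ k → d s < b s → c s ≤ a s := by
    intro s hs hd
    by_contra hlt
    refine hcon ⟨fun t => if t ≤ s then a t else c (t - 1),
      fun t => if t ≤ s then b t else d (t - 1), fun t ht => ?_, fun t ht => ?_⟩
    · dsimp only
      by_cases h : t ≤ s
      · simp only [h, if_true]
        have := p1 t (by omega)
        refine ⟨this.1, ?_⟩; omega
      · simp only [h, if_false]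
        have := q1 (t - 1) (by omega)
        refine ⟨this.1, ?_⟩; omega
    · dsimp only
      by_cases h : t + 1 ≤ s
      · simp only [h, (by omega : t ≤ s), if_true]
        exact p2 t (by omega)
      · by_cases h' : t ≤ s
        · have : t = s := by omega
          subst this
          simp only [h, h', if_true, if_false, Nat.add_sub_cancel]
          omega
        · simp only [h, h', if_false, Nat.add_sub_cancel]
          exact q3 t (t - 1) (by omega) (by omega)
  have main : ∀ s, s ≤ k → d s < b s ∧ c s ≤ a s := by
    intro s
    induction s with
    | zero =>
      intro _
      have h1 := q1 0 (by omega)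
      have h2 : d 0 < b 0 := by omega
      exact ⟨h2, up 0 (by omega) h2⟩
    | succ s ih =>
      intro hs
      have h0 := ih (by omega)
      have hd : d s ≤ b (s + 1) := by
        by_contra hlt
        refine hn ⟨fun t => if t ≤ s then c t else a t,
          fun t => if t ≤ s then d t else b t, fun t ht => ?_, fun t ht => ?_⟩
        · dsimp only
          by_cases h : t ≤ s
          · simp only [h, if_true]
            have h1 := q1 t (by omega)
            have h2 := q3 k t (by omega) (by omega)
            have h3 := q1 k (by omega)
            refine ⟨h1.1, ?_⟩; omega
          · simp only [h, if_false]
            have h1 := p1 t (by omega)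
            have h2 := p3 t 0 (by omega) (by omega)
            have h3 := p1 0 (by omega)
            refine ⟨h1.1, ?_⟩; omega
        · dsimp only
          by_cases h : t + 1 ≤ s
          · simp only [h, (by omega : t ≤ s), if_true]
            exact q2 t (by omega)
          · by_cases h' : t ≤ s
            · have : t = s := by omega
              subst this
              simp only [h, h', if_true, if_false]
              have := p2 t (by omega)
              omega
            · simp only [h, h', if_false]
              exact p2 t (by omega)
      have h3 := q2 s (by omega)
      have h4 : d (s + 1) < b (s + 1) := by omega
      exact ⟨h4, up (s + 1) hs h4⟩
  have := main k le_rfl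
  have := p1 k (by omega)
  omega

theorem SChain.double {S : ℕ → ℕ → Prop} (hS : ∀ x y, S x y → S y x) {i m : ℕ}
    {a b : ℕ → ℕ} (h1 : ∀ s, s < m → S (a s) (b s) ∧ 1 ≤ a s ∧ 1 ≤ b s ∧ a s ≤ i ∧ b s ≤ i)
    (h2 : ∀ s, s + 1 < m → a s < a (s + 1) ∧ b (s + 1) < b s)
    (h3 : ∀ s, s < m → a s < b s) : SChain S i i (2 * m) := by
  refine ⟨fun s => if s < m then a s else b (2 * m - 1 - s),
    fun s => if s < m then b s else a (2 * m - 1 - s), fun s hs => ?_, fun s hs => ?_⟩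
  · dsimp only
    by_cases h : s < m
    · simp only [h, if_true]; exact h1 s h
    · simp only [h, if_false]
      have := h1 (2 * m - 1 - s) (by omega)
      exact ⟨hS _ _ this.1, this.2.2.1, this.2.1, this.2.2.2.2, this.2.2.2.1⟩
  · dsimp only
    by_cases h : s + 1 < m
    · simp only [h, (by omega : s < m), if_true]; exact h2 s h
    · by_cases h' : s < m
      · have h4 : 2 * m - 1 - (s + 1) = s := by omega
        simp only [h, h', if_true, if_false, h4]
        have := h3 s h'
        omega
      · simp only [h, h', if_false]
        have := chain_pair h2 (2 * m - 1 - s) (2 * m - 1 - (s + 1)) (by omega) (by omega)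
        omega

theorem SChain.odd {S : ℕ → ℕ → Prop} (hS : ∀ x y, S x y → S y x) (hd : ∀ x, ¬ S x x)
    {i l : ℕ} (h : SChain S i i (2 * l + 1)) : SChain S i i (2 * l + 2) := by
  have gen : ∀ a b : ℕ → ℕ,
      (∀ s, s < 2 * l + 1 → S (a s) (b s) ∧ 1 ≤ a s ∧ 1 ≤ b s ∧ a s ≤ i ∧ b s ≤ i) →
      (∀ s, s + 1 < 2 * l + 1 → a s < a (s + 1) ∧ b (s + 1) < b s) →
      a l < b l → SChain S i i (2 * l + 2) := by
    intro a b h1 h2 h3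
    have := SChain.double hS (i := i) (m := l + 1) (a := a) (b := b)
      (fun s hs => h1 s (by omega)) (fun s hs => h2 s (by omega)) (fun s hs => by
        rcases Nat.lt_or_ge s l with h | h
        · have := chain_pair h2 l s h (by omega); omega
        · have : s = l := by omega
          subst this; exact h3)
    exact this
  obtain ⟨a, b, h1, h2⟩ := h
  rcases Nat.lt_trichotomy (a l) (b l) with h | h | h
  · exact gen a b h1 h2 h
  · exact absurd (h ▸ (h1 l (by omega)).1) (hd _)
  · refine gen (fun s => b (2 * l - s)) (fun s => a (2 * l - s)) (fun s hs => ?_)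
      (fun s hs => ?_) ?_
    · have h3 := h1 (2 * l - s) (by omega)
      exact ⟨hS _ _ h3.1, h3.2.2.1, h3.2.1, h3.2.2.2.2, h3.2.2.2.1⟩
    · have := chain_pair h2 (2 * l - s) (2 * l - (s + 1)) (by omega) (by omega)
      exact ⟨this.2, this.1⟩
    · have : 2 * l - l = l := by omega
      simp only [this]; exact h

open Classical in
/-- maximal chain length -/
noncomputable def rho (S : ℕ → ℕ → Prop) (i j : ℕ) : ℕ := Nat.findGreatest (SChain S i j) i

theorem le_rho {S : ℕ → ℕ → Prop} {i j k : ℕ} : k ≤ rho S i j ↔ SChain S i j k := by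
  classical
  constructor
  · intro h
    have h1 : SChain S i j (rho S i j) := by
      unfold rho
      exact Nat.findGreatest_spec (P := SChain S i j) (Nat.zero_le i) (SChain.zero S i j)
    exact h1.mono le_rfl le_rfl h
  · intro h
    exact Nat.le_findGreatest h.le h

theorem rho_symm {S : ℕ → ℕ → Prop} (hS : ∀ x y, S x y → S y x) (i j : ℕ) :
    rho S i j = rho S j i :=
  le_antisymm (le_rho.2 (SChain.symm hS (le_rho.1 le_rfl)))
    (le_rho.2 (SChain.symm hS (le_rho.1 le_rfl)))

theorem rho_zero (S : ℕ → ℕ → Prop) (j : ℕ) : rho S 0 j = 0 := by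
  simp [rho]

theorem rho_mono {S : ℕ → ℕ → Prop} (i j : ℕ) : rho S i j ≤ rho S (i + 1) j :=
  le_rho.2 ((le_rho.1 le_rfl).mono (by omega) le_rfl le_rfl)

theorem rho_lip {S : ℕ → ℕ → Prop} (i j : ℕ) : rho S (i + 1) j ≤ rho S i j + 1 := by
  by_contra h
  have h1 : SChain S (i + 1) j (rho S i j + 2) := le_rho.1 (by omega)
  have := le_rho.2 h1.dropRow
  omega

theorem rho_super {S : ℕ → ℕ → Prop} (hS : ∀ x y, S x y → S y x) (i j : ℕ) :
    rho S i (j + 1) + rho S (i + 1) j ≤ rho S (i + 1) (j + 1) + rho S i j := by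
  have m1 := rho_mono (S := S) i (j + 1)
  have m2 : rho S (i + 1) j ≤ rho S (i + 1) (j + 1) := by
    rw [rho_symm hS (i + 1) j, rho_symm hS (i + 1) (j + 1)]; exact rho_mono _ _
  have l1 := rho_lip (S := S) i j
  have l2 : rho S i (j + 1) ≤ rho S i j + 1 := by
    rw [rho_symm hS i (j + 1), rho_symm hS i j]; exact rho_lip _ _
  by_contra hcon
  have e1 : rho S i j + 1 ≤ rho S i (j + 1) := by omega
  have e2 : rho S i j + 1 ≤ rho S (i + 1) j := by omega
  have h3 := le_rho.2 (SChain.key (le_rho.1 e1) (le_rho.1 e2)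
    (fun h => by have := le_rho.2 h; omega))
  omega

theorem rho_even {S : ℕ → ℕ → Prop} (hS : ∀ x y, S x y → S y x) (hd : ∀ x, ¬ S x x)
    (i : ℕ) : Even (rho S i i) := by
  by_contra h
  rw [Nat.not_even_iff_odd] at h
  obtain ⟨l, hl⟩ := h
  have h1 := le_rho.2 (SChain.odd hS hd (le_rho.1 (le_of_eq hl.symm)))
  omega

theorem exists_fpf (n : ℕ) (ρ : ℕ → ℕ → ℕ) (h0 : ∀ j, ρ 0 j = 0)
    (hsym : ∀ i j, ρ i j = ρ j i) (hmono : ∀ i j, ρ i j ≤ ρ (i + 1) j)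
    (hlip : ∀ i j, ρ (i + 1) j ≤ ρ i j + 1)
    (hsup : ∀ i j, ρ i (j + 1) + ρ (i + 1) j ≤ ρ (i + 1) (j + 1) + ρ i j)
    (heven : ∀ i, Even (ρ i i)) :
    ∃ z ∈ FPFIn n, ∀ i j, i ≤ n → j ≤ n → rnk z i j = ρ i j := by
  classical
  set D : ℕ → ℕ → Prop := fun x j => 1 ≤ x ∧ ρ x j = ρ (x - 1) j + 1 with hD
  have D0 : ∀ x, ¬ D x 0 := by
    rintro x ⟨h1, h2⟩
    rw [hsym, h0, hsym, h0] at h2; omega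
  have Dsucc : ∀ x j, D x j → D x (j + 1) := by
    rintro x j ⟨h1, h2⟩
    obtain ⟨y, rfl⟩ : ∃ y, x = y + 1 := ⟨x - 1, by omega⟩
    have a1 := hsup y j
    have a2 := hlip y (j + 1)
    simp only [Nat.add_sub_cancel] at h2
    refine ⟨h1, ?_⟩
    simp only [Nat.add_sub_cancel]
    omega
  have Dmono : ∀ x j j', j ≤ j' → D x j → D x j' := by
    intro x j j' hj h
    induction hj with
    | refl => exact h
    | step _ ih => exact Dsucc _ _ ih
  set M : ℕ → ℕ → Prop := fun x y => 1 ≤ x ∧ 1 ≤ y ∧ D x y ∧ ¬ D x (y - 1) with hM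
  have nD : ∀ x j, 1 ≤ x → ¬ D x j → ρ x j = ρ (x - 1) j := by
    intro x j hx h
    have a1 := hmono (x - 1) j
    have a2 := hlip (x - 1) j
    rw [Nat.sub_add_cancel hx] at a1 a2
    have : ¬ ρ x j = ρ (x - 1) j + 1 := fun h' => h ⟨hx, h'⟩
    omega
  have Msym : ∀ x y, M x y → M y x := by
    rintro x y ⟨h1, h2, h3, h4⟩
    have e1 := h3.2
    have e2 := nD _ _ h1 h4
    have a1 := hmono (x - 1) (y - 1)
    have b1 := hmono (y - 1) x
    have b2 := hlip (y - 1) x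
    have b3 := hmono (y - 1) (x - 1)
    have b4 := hlip (y - 1) (x - 1)
    rw [Nat.sub_add_cancel h2] at b1 b2 b3 b4
    rw [hsym x y, hsym (x - 1) y] at e1
    rw [hsym x (y - 1), hsym (x - 1) (y - 1)] at e2
    refine ⟨h2, h1, ⟨h2, by omega⟩, fun h => ?_⟩
    have := h.2
    omega
  have Muniq : ∀ x y y', M x y → M x y' → y = y' := by
    rintro x y y' ⟨h1, h2, h3, h4⟩ ⟨k1, k2, k3, k4⟩
    rcases Nat.lt_trichotomy y y' with h | h | h
    · exact absurd (Dmono _ _ _ (by omega) h3) k4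
    · exact h
    · exact absurd (Dmono _ _ _ (by omega) k3) h4
  have Mirr : ∀ x, ¬ M x x := by
    rintro x ⟨h1, h2, h3, h4⟩
    have e1 := h3.2
    have e2 := nD _ _ h1 h4
    rw [hsym x (x - 1)] at e2
    obtain ⟨u, hu⟩ := heven x
    obtain ⟨v, hv⟩ := heven (x - 1)
    omega
  have Dex : ∀ x j, D x j → ∃ y, 1 ≤ y ∧ y ≤ j ∧ M x y := by
    intro x j
    induction j with
    | zero => intro h; exact absurd h (D0 x)
    | succ j ih =>
      intro h
      by_cases h' : D x j
      · obtain ⟨y, a, b, c⟩ := ih h'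
        exact ⟨y, a, by omega, c⟩
      · exact ⟨j + 1, by omega, le_rfl, h.1, by omega, h, by simpa using h'⟩
  have cardD : ∀ i j, ((Finset.Icc 1 i).filter fun x => D x j).card = ρ i j := by
    intro i j
    induction i with
    | zero => simp [h0]
    | succ i ih =>
      have e : Finset.Icc 1 (i + 1) = insert (i + 1) (Finset.Icc 1 i) := by
        ext x; simp only [Finset.mem_Icc, Finset.mem_insert]; omega
      rw [e, Finset.filter_insert]
      by_cases h : D (i + 1) j
      · rw [if_pos h, Finset.card_insert_of_notMem (by simp), ih]
        have := h.2
        simpa using this.symm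
      · rw [if_neg h, ih]
        have := nD _ _ (by omega) h
        simpa using this.symm
  set U : ℕ → Prop := fun x => 1 ≤ x ∧ x ≤ n ∧ ¬ D x n with hU
  have hUfin : (Set.ofPred U).Finite :=
    (Set.finite_Icc 1 n).subset (fun x hx => ⟨hx.1, hx.2.1⟩)
  set k := Nat.count U (n + 1) with hk
  have hkn : k + ρ n n = n := by
    have e1 : k = ((Finset.Icc 1 n).filter fun x => ¬ D x n).card := by
      rw [hk, Nat.count_eq_card_filter_range]
      congr 1
      ext x
      simp only [Finset.mem_filter, Finset.mem_range, Finset.mem_Icc, hU]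
      constructor
      · rintro ⟨a, b, c, d⟩; exact ⟨⟨b, c⟩, d⟩
      · rintro ⟨⟨b, c⟩, d⟩; exact ⟨by omega, b, c, d⟩
    have e2 := Finset.card_filter_add_card_filter_not (s := Finset.Icc 1 n) (fun x => D x n)
    rw [cardD, ← e1] at e2
    simp at e2
    omega
  have hkeven : (n + k) % 2 = 0 := by
    obtain ⟨u, hu⟩ := heven n
    omega
  have hcount : ∀ x, U x → Nat.count U x < k := fun x hx =>
    Nat.count_strict_mono hx (by have := hx.2.1; omega)
  have hcard : ∀ m, m < k → m < hUfin.toFinset.card := fun m hm =>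
    lt_of_lt_of_le hm (Nat.count_le_card hUfin _)
  have hnthU : ∀ m, m < k → U (Nat.nth U m) := fun m hm =>
    Nat.nth_mem_of_lt_card hUfin (hcard m hm)
  have hcn : ∀ m, m < k → Nat.count U (Nat.nth U m) = m := fun m hm =>
    Nat.count_nth_of_lt_card_finite hUfin (hcard m hm)
  have hg : ∀ x, ∃ y, D x n → 1 ≤ y ∧ y ≤ n ∧ M x y := by
    intro x
    by_cases h : D x n
    · obtain ⟨y, hy⟩ := Dex x n h; exact ⟨y, fun _ => hy⟩
    · exact ⟨0, fun h' => absurd h' h⟩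
  choose g hg using hg
  set f : ℕ → ℕ := fun x => if x = 0 then 0 else if x ≤ n then
    (if D x n then g x else n + 1 + Nat.count U x) else
    if x ≤ n + k then Nat.nth U (x - n - 1) else oneFPF x with hf
  have f1 : ∀ x, 1 ≤ x → x ≤ n → D x n → f x = g x := by
    intro x a b c
    simp only [hf, if_neg (by omega : ¬ x = 0), if_pos b, if_pos c]
  have f2 : ∀ x, U x → f x = n + 1 + Nat.count U x := by
    rintro x ⟨a, b, c⟩
    simp only [hf, if_neg (by omega : ¬ x = 0), if_pos b, if_neg c]
  have f3 : ∀ x, n < x → x ≤ n + k → f x = Nat.nth U (x - n - 1) := by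
    rintro x a b
    simp only [hf, if_neg (by omega : ¬ x = 0), if_neg (by omega : ¬ x ≤ n), if_pos b]
  have f4 : ∀ x, n + k < x → f x = oneFPF x := by
    rintro x a
    simp only [hf, if_neg (by omega : ¬ x = 0), if_neg (by omega : ¬ x ≤ n),
      if_neg (by omega : ¬ x ≤ n + k)]
  have f0 : f 0 = 0 := by simp [hf]
  have cases4 : ∀ x, x = 0 ∨ (1 ≤ x ∧ x ≤ n ∧ D x n) ∨ U x ∨ (n < x ∧ x ≤ n + k) ∨
      n + k < x := by
    intro x
    by_cases hd : D x n
    · simp only [hd, hU]; grind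
    · simp only [hd, hU]; grind
  have oneF : ∀ x, n + k < x → n + k < oneFPF x ∧ oneFPF (oneFPF x) = x ∧ oneFPF x ≠ x ∧
      oneFPF x ≤ x + 1 := by
    intro x hx
    unfold oneFPF
    refine ⟨?_, ?_, ?_, ?_⟩ <;> split_ifs <;> omega
  have finv : Function.Involutive f := by
    intro x
    rcases cases4 x with h | ⟨a, b, c⟩ | h | ⟨a, b⟩ | h
    · rw [h, f0, f0]
    · obtain ⟨g1, g2, g3⟩ := hg x c
      have g4 := Msym _ _ g3
      have g5 : D (g x) n := Dmono _ _ _ b g4.2.2.1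
      rw [f1 x a b c, f1 _ g1 g2 g5]
      exact Muniq _ _ _ (hg _ g5).2.2 g4
    · have := hcount x h
      rw [f2 x h, f3 _ (by omega) (by omega)]
      rw [(by omega : n + 1 + Nat.count U x - n - 1 = Nat.count U x)]
      exact Nat.nth_count h
    · rw [f3 x a b, f2 _ (hnthU _ (by omega)), hcn _ (by omega)]
      omega
    · rw [f4 x h, f4 _ (oneF x h).1, (oneF x h).2.1]
  have ffix : ∀ x, 1 ≤ x → f x ≠ x := by
    intro x hx
    rcases cases4 x with h | ⟨a, b, c⟩ | h | ⟨a, b⟩ | h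
    · omega
    · rw [f1 x a b c]
      intro h
      have := (hg x c).2.2
      rw [h] at this
      exact Mirr _ this
    · rw [f2 x h]
      have := h.2.1
      omega
    · rw [f3 x a b]
      have := (hnthU (x - n - 1) (by omega)).2.1
      omega
    · rw [f4 x h]; exact (oneF x h).2.2.1
  have fle : ∀ x, x ≤ n + k → f x ≤ n + k := by
    intro x hx
    by_contra hcon
    have h1 := f4 _ (not_le.1 hcon)
    rw [finv] at h1
    have := (oneF _ (not_le.1 hcon)).1
    omega
  refine ⟨finv.toPerm, ⟨⟨f0, ffix, ?_, n + k + 1, fun i hi => f4 i (by omega)⟩, ?_⟩, ?_⟩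
  · ext x; exact finv x
  · rintro ⟨p, q⟩ ⟨h1, h2, h3, h4⟩
    change q < f p at h2
    change p < f q at h4
    dsimp only at h1 h3
    have hp : p ≤ n := by
      by_contra hpn
      rcases Nat.lt_or_ge (n + k) p with h | h
      · rcases Nat.lt_or_ge (n + k) q with h' | h'
        · rw [f4 q h'] at h4
          have := (oneF q h').2.2.2
          omega
        · have := fle q h'
          omega
      · rw [f3 p (by omega) h] at h2
        have hu := hnthU (p - n - 1) (by omega)
        have hc := hcn (p - n - 1) (by omega)
        have hun := hu.2.1
        by_cases hq : D q n
        · rw [f1 q (by omega) (by omega) hq] at h4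
          have := (hg q hq).2.1
          omega
        · rw [f2 q ⟨by omega, by omega, hq⟩] at h4
          have := Nat.count_monotone U h2.le
          omega
    simp only [Set.mem_prod, Set.mem_Icc]
    omega
  · intro i j hi hj
    rw [← cardD i j]
    unfold rnk
    congr 1
    apply Finset.filter_congr
    intro x hx
    rw [Finset.mem_Icc] at hx ⊢
    change 1 ≤ f x ∧ f x ≤ j ↔ D x j
    by_cases h : D x n
    · rw [f1 x hx.1 (by omega) h]
      obtain ⟨g1, g2, g3⟩ := hg x h
      constructor
      · rintro ⟨_, h2⟩; exact Dmono _ _ _ h2 g3.2.2.1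
      · intro hd
        obtain ⟨y, y1, y2, y3⟩ := Dex _ _ hd
        rw [Muniq _ _ _ g3 y3]
        exact ⟨y1, y2⟩
    · rw [f2 x ⟨hx.1, by omega, h⟩]
      constructor
      · rintro ⟨_, h2⟩; omega
      · intro hd; exact absurd (Dmono _ _ _ hj hd) h

/-- inversions in `[N]` -/
def InvN (N : ℕ) (w : Equiv.Perm ℕ) : Finset (ℕ × ℕ) :=
  (Finset.Icc 1 N ×ˢ Finset.Icc 1 N).filter fun p => p.1 < p.2 ∧ w p.2 < w p.1

theorem mem_InvN {N : ℕ} {w : Equiv.Perm ℕ} {p : ℕ × ℕ} : p ∈ InvN N w ↔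
    1 ≤ p.1 ∧ p.1 ≤ N ∧ 1 ≤ p.2 ∧ p.2 ≤ N ∧ p.1 < p.2 ∧ w p.2 < w p.1 := by
  simp only [InvN, Finset.mem_filter, Finset.mem_product, Finset.mem_Icc]
  tauto

theorem InvN_swap {N i j : ℕ} {w : Equiv.Perm ℕ} (hi : 1 ≤ i) (hij : i < j) (hj : j ≤ N)
    (hw : w i < w j) : (InvN N w).card ≤ (InvN N (w * Equiv.swap i j)).card := by
  set t := Equiv.swap i j with ht
  have tt : ∀ x, t (t x) = x := fun x => Equiv.swap_apply_self i j x
  have ti : t i = j := Equiv.swap_apply_left i j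
  have tj : t j = i := Equiv.swap_apply_right i j
  have tn : ∀ x, x ≠ i → x ≠ j → t x = x := fun x => Equiv.swap_apply_of_ne_of_ne
  have tb : ∀ x, 1 ≤ x → x ≤ N → 1 ≤ t x ∧ t x ≤ N := by
    intro x h1 h2
    by_cases e1 : x = i
    · rw [e1, ti]; omega
    · by_cases e2 : x = j
      · rw [e2, tj]; omega
      · rw [tn x e1 e2]; omega
  apply Finset.card_le_card_of_injOn
    (fun p => if t p.1 < t p.2 then (t p.1, t p.2) else p)
  · rintro ⟨p, q⟩ hp
    have hp' := mem_InvN.1 hp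
    dsimp only at hp' ⊢
    obtain ⟨h1, h2, h3, h4, h5, h6⟩ := hp'
    change _ ∈ InvN N (w * t)
    rw [mem_InvN]
    by_cases h : t p < t q
    · rw [if_pos h]
      simp only [Equiv.Perm.mul_apply, tt]
      exact ⟨(tb p h1 h2).1, (tb p h1 h2).2, (tb q h3 h4).1, (tb q h3 h4).2, h, h6⟩
    · rw [if_neg h]
      simp only [Equiv.Perm.mul_apply]
      refine ⟨h1, h2, h3, h4, h5, ?_⟩
      by_cases e1 : p = i
      · subst e1
        have e2 : q ≠ j := by rintro rfl; omega
        rw [tn q (by omega) e2, ti]; omega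
      · by_cases e2 : p = j
        · subst e2
          rw [tj, tn q (by omega) (by omega)] at h; omega
        · rw [tn p e1 e2] at h ⊢
          by_cases e3 : q = i
          · subst e3; rw [ti] at h; omega
          · by_cases e4 : q = j
            · subst e4; rw [tj]; omega
            · rw [tn q e3 e4] at h; omega
  · rintro ⟨p, q⟩ hp ⟨p', q'⟩ hp' he
    have hp := mem_InvN.1 hp
    have hp' := mem_InvN.1 hp'
    dsimp only at hp hp' he
    by_cases h : t p < t q
    · by_cases h' : t p' < t q'
      · rw [if_pos h, if_pos h', Prod.mk.injEq] at he
        rw [t.injective he.1, t.injective he.2]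
      · rw [if_pos h, if_neg h', Prod.mk.injEq] at he
        rw [← he.1, ← he.2, tt, tt] at h'
        omega
    · by_cases h' : t p' < t q'
      · rw [if_neg h, if_pos h', Prod.mk.injEq] at he
        rw [he.1, he.2, tt, tt] at h
        omega
      · rw [if_neg h, if_neg h'] at he
        exact he

theorem InvN_inv {N : ℕ} {w : Equiv.Perm ℕ} (hw : ∀ x, 1 ≤ x → x ≤ N → 1 ≤ w x ∧ w x ≤ N) :
    (InvN N w).card ≤ (InvN N w⁻¹).card := by
  apply Finset.card_le_card_of_injOn (fun p => (w p.2, w p.1))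
  · rintro ⟨p, q⟩ hp
    have hp' := mem_InvN.1 hp
    change _ ∈ InvN N w⁻¹
    rw [mem_InvN]
    dsimp only at hp' ⊢
    have b1 : w⁻¹ (w p) = p := by simp
    have b2 : w⁻¹ (w q) = q := by simp
    rw [b1, b2]
    have a1 := hw p (by omega) (by omega)
    have a2 := hw q (by omega) (by omega)
    omega
  · rintro ⟨p, q⟩ _ ⟨p', q'⟩ _ he
    dsimp only at he
    rw [Prod.mk.injEq] at he
    rw [w.injective he.1, w.injective he.2]

theorem rnk_swap {i j : ℕ} {w : Equiv.Perm ℕ} (h0 : w 0 = 0) (hi : 1 ≤ i) (hij : i < j)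
    (hw : w i < w j) (p q : ℕ) : rnk (w * Equiv.swap i j) p q ≤ rnk w p q := by
  set t := Equiv.swap i j with ht
  have tt : ∀ x, t (t x) = x := fun x => Equiv.swap_apply_self i j x
  have ti : t i = j := Equiv.swap_apply_left i j
  have tj : t j = i := Equiv.swap_apply_right i j
  have tn : ∀ x, x ≠ i → x ≠ j → t x = x := fun x => Equiv.swap_apply_of_ne_of_ne
  have w1 : ∀ x, 1 ≤ x → 1 ≤ w x := by
    intro x hx
    by_contra h
    have h : w x = 0 := by omega
    have := w.injective (h.trans h0.symm)
    omega
  have t1 : ∀ x, 1 ≤ x → 1 ≤ t x := by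
    intro x hx
    by_cases e1 : x = i
    · rw [e1, ti]; omega
    · by_cases e2 : x = j
      · rw [e2, tj]; omega
      · rw [tn x e1 e2]; omega
  unfold rnk
  apply Finset.card_le_card_of_injOn (fun x => if t x ≤ p then t x else x)
  · intro x hx
    have hx := Finset.mem_filter.1 hx
    simp only [Finset.mem_Icc, Equiv.Perm.mul_apply] at hx
    refine Finset.mem_filter.2 ?_
    simp only [Finset.mem_Icc]
    by_cases h : t x ≤ p
    · simp only [if_pos h]
      exact ⟨⟨t1 x hx.1.1, h⟩, hx.2⟩
    · simp only [if_neg h]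
      refine ⟨hx.1, w1 x hx.1.1, ?_⟩
      have : x = i := by
        by_contra e1
        by_cases e2 : x = j
        · rw [e2, tj] at h; omega
        · rw [tn x e1 e2] at h; omega
      subst this
      rw [ti] at hx
      omega
  · intro x hx y hy he
    have hx := Finset.mem_filter.1 hx
    have hy := Finset.mem_filter.1 hy
    simp only [Finset.mem_Icc] at hx hy
    dsimp only at he
    by_cases h : t x ≤ p
    · by_cases h' : t y ≤ p
      · rw [if_pos h, if_pos h'] at he
        exact t.injective he
      · rw [if_pos h, if_neg h'] at he
        rw [← he, tt] at h'
        omega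
    · by_cases h' : t y ≤ p
      · rw [if_neg h, if_pos h'] at he
        rw [he, tt] at h
        omega
      · rw [if_neg h, if_neg h'] at he
        exact he

theorem rnk_inv {w : Equiv.Perm ℕ} (p q : ℕ) : rnk w p q = rnk w⁻¹ q p := by
  have gen : ∀ (w : Equiv.Perm ℕ) (p q : ℕ), rnk w p q ≤ rnk w⁻¹ q p := by
    intro w p q
    unfold rnk
    apply Finset.card_le_card_of_injOn (fun x => w x)
    · intro x hx
      have hx := Finset.mem_filter.1 hx
      exact Finset.mem_filter.2 ⟨hx.2, by simpa using hx.1⟩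
    · intro x _ y _ h
      exact w.injective h
  refine le_antisymm (gen w p q) ?_
  have := gen w⁻¹ q p
  rwa [inv_inv] at this

theorem fpf_facts {z : Equiv.Perm ℕ} (hz : z ∈ IFPFInfty) (z2 : ∀ x, z (z x) = x) {N : ℕ}
    (hN : N % 2 = 0) (hzN : ∀ i, N < i → z i = oneFPF i) :
    (∀ x, 1 ≤ x → x ≤ N → 1 ≤ z x ∧ z x ≤ N) ∧ 2 * (InvN N z).card = 4 * ellFpf z + N := by
  obtain ⟨h0, hfix, -, -⟩ := hz
  have out : ∀ x, N < x → N < z x ∧ z x ≤ x + 1 := by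
    intro x hx
    rw [hzN x hx]
    unfold oneFPF
    split_ifs <;> omega
  have pres : ∀ x, 1 ≤ x → x ≤ N → 1 ≤ z x ∧ z x ≤ N := by
    intro x h1 h2
    constructor
    · by_contra h
      have h : z x = 0 := by omega
      have := z.injective (h.trans h0.symm)
      omega
    · by_contra h
      have := (out (z x) (by omega)).1
      rw [z2] at this
      omega
  refine ⟨pres, ?_⟩
  set F : Finset (ℕ × ℕ) := (Finset.Icc 1 N ×ˢ Finset.Icc 1 N).filter
    fun p => p.2 < p.1 ∧ p.2 < z p.1 ∧ p.1 < z p.2 with hF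
  set G : Finset (ℕ × ℕ) := (Finset.Icc 1 N ×ˢ Finset.Icc 1 N).filter
    fun p => p.1 < z p.2 ∧ p.2 < z p.1 with hG
  have hell : ellFpf z = F.card := by
    unfold ellFpf
    rw [← Set.ncard_coe_finset]
    congr 1
    ext ⟨p, q⟩
    simp only [Dss, hF, Set.mem_ofPred_eq, Finset.coe_filter, Finset.mem_product, Finset.mem_Icc]
    constructor
    · rintro ⟨h1, h2, h3, h4⟩
      have hp : p ≤ N := by
        by_contra hp
        rcases Nat.lt_or_ge N q with h | h
        · have := out q h; omega
        · have := pres q h1 h; omega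
      omega
    · omega
  have hInv : (InvN N z).card = G.card := by
    apply Finset.card_nbij' (fun p => (p.1, z p.2)) (fun p => (p.1, z p.2))
    · rintro ⟨p, q⟩ hp
      have hp := mem_InvN.1 hp
      dsimp only at hp
      have a1 := pres q (by omega) (by omega)
      have a2 := z2 q
      simp only [hG, Finset.coe_filter, Set.mem_ofPred_eq, Finset.mem_product, Finset.mem_Icc]
      omega
    · rintro ⟨p, q⟩ hp
      simp only [hG, Finset.coe_filter, Set.mem_ofPred_eq, Finset.mem_product, Finset.mem_Icc] at hp
      have a1 := pres q (by omega) (by omega)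
      have a2 := z2 q
      refine mem_InvN.2 ?_
      dsimp only
      omega
    · rintro ⟨p, q⟩ _; simp [z2]
    · rintro ⟨p, q⟩ _; simp [z2]
  set d := ((Finset.Icc 1 N).filter fun x => x < z x).card with hd
  have hd2 : 2 * d = N := by
    have e1 : d = ((Finset.Icc 1 N).filter fun x => ¬ x < z x).card := by
      apply Finset.card_nbij' (fun x => z x) (fun x => z x)
      · intro x hx
        simp only [Finset.coe_filter, Set.mem_ofPred_eq, Finset.mem_Icc] at hx ⊢
        have := pres x (by omega) (by omega)
        have := z2 x
        omega
      · intro x hx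
        simp only [Finset.coe_filter, Set.mem_ofPred_eq, Finset.mem_Icc] at hx ⊢
        have := pres x (by omega) (by omega)
        have := z2 x
        have := hfix x (by omega)
        omega
      · intro x _; exact z2 x
      · intro x _; exact z2 x
    have e2 := Finset.card_filter_add_card_filter_not (s := Finset.Icc 1 N) (fun x => x < z x)
    rw [← e1, ← hd] at e2
    simp at e2
    omega
  have hG1 : (G.filter fun p => p.2 < p.1) = F := by
    ext ⟨p, q⟩
    simp only [hG, hF, Finset.mem_filter, Finset.mem_product, Finset.mem_Icc]
    tauto
  have hG2 : ((G.filter fun p => ¬ p.2 < p.1).filter fun p => p.1 < p.2).card = F.card := by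
    apply Finset.card_nbij' Prod.swap Prod.swap
    · rintro ⟨p, q⟩ hp
      simp only [hG, hF, Finset.coe_filter, Finset.mem_filter, Set.mem_ofPred_eq, Prod.swap,
        Finset.mem_product, Finset.mem_Icc] at hp ⊢
      omega
    · rintro ⟨p, q⟩ hp
      simp only [hG, hF, Finset.coe_filter, Finset.mem_filter, Set.mem_ofPred_eq, Prod.swap,
        Finset.mem_product, Finset.mem_Icc] at hp ⊢
      omega
    · rintro ⟨p, q⟩ _; rfl
    · rintro ⟨p, q⟩ _; rfl
  have hG3 : ((G.filter fun p => ¬ p.2 < p.1).filter fun p => ¬ p.1 < p.2).card = d := by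
    apply Finset.card_nbij' (fun p => p.1) (fun x => (x, x))
    · rintro ⟨p, q⟩ hp
      simp only [hG, Finset.coe_filter, Finset.mem_filter, Set.mem_ofPred_eq,
        Finset.mem_product, Finset.mem_Icc] at hp ⊢
      obtain rfl : p = q := by omega
      omega
    · intro x hx
      simp only [hG, Finset.coe_filter, Finset.mem_filter, Set.mem_ofPred_eq,
        Finset.mem_product, Finset.mem_Icc] at hx ⊢
      omega
    · rintro ⟨p, q⟩ hp
      simp only [hG, Finset.coe_filter, Finset.mem_filter, Set.mem_ofPred_eq,
        Finset.mem_product, Finset.mem_Icc] at hp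
      obtain rfl : p = q := by omega
      rfl
    · intro x _; rfl
  have s1 := Finset.card_filter_add_card_filter_not (s := G) (fun p => p.2 < p.1)
  have s2 := Finset.card_filter_add_card_filter_not
    (s := G.filter fun p => ¬ p.2 < p.1) (fun p => p.1 < p.2)
  rw [hG1] at s1
  rw [hG2, hG3] at s2
  omega

theorem invol_apply {z : Equiv.Perm ℕ} (hz : z ∈ IFPFInfty) (x : ℕ) : z (z x) = x := by
  have := hz.2.2.1
  exact congrArg (fun e : Equiv.Perm ℕ => e x) this

theorem invol_inv {z : Equiv.Perm ℕ} (hz : z ∈ IFPFInfty) : z⁻¹ = z :=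
  inv_eq_of_mul_eq_one_left hz.2.2.1

theorem conj_mem {z : Equiv.Perm ℕ} (hz : z ∈ IFPFInfty) {i j : ℕ} (hi : 1 ≤ i) (hij : i < j) :
    Equiv.swap i j * z * Equiv.swap i j ∈ IFPFInfty := by
  obtain ⟨h0, hfix, h2, N, hN⟩ := hz
  set t := Equiv.swap i j with ht
  have tt : t * t = 1 := Equiv.swap_mul_self i j
  have ttx : ∀ x, t (t x) = x := fun x => Equiv.swap_apply_self i j x
  have tn : ∀ x, x ≠ i → x ≠ j → t x = x := fun x => Equiv.swap_apply_of_ne_of_ne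
  refine ⟨?_, ?_, ?_, N + j + 3, ?_⟩
  · simp [tn 0 (by omega) (by omega), h0]
  · intro x hx he
    simp only [Equiv.Perm.mul_apply] at he
    have h3 : z (t x) = t x := by rw [← ttx (z (t x)), he]
    refine hfix _ ?_ h3
    by_contra h
    have h : t x = 0 := by omega
    have : x = t 0 := by rw [← h, ttx]
    rw [tn 0 (by omega) (by omega)] at this
    omega
  · calc t * z * t * (t * z * t) = t * z * (t * t) * z * t := by group
      _ = 1 := by rw [tt, mul_one, mul_assoc t z z, h2, mul_one, tt]
  · intro x hx
    have e : oneFPF x ≠ i ∧ oneFPF x ≠ j := by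
      unfold oneFPF; split_ifs <;> omega
    simp only [Equiv.Perm.mul_apply]
    rw [tn x (by omega) (by omega), hN x (by omega), tn _ e.1 e.2]

theorem rnk_conj {z : Equiv.Perm ℕ} (hz : z ∈ IFPFInfty) {i j : ℕ} (hi : 1 ≤ i) (hij : i < j)
    (hlt : z i < z j) (p q : ℕ) :
    rnk (Equiv.swap i j * z * Equiv.swap i j) p q ≤ rnk z p q := by
  have z2 := invol_apply hz
  have zi := invol_inv hz
  have hfix := hz.2.1
  set t := Equiv.swap i j with ht
  have tn : ∀ x, x ≠ i → x ≠ j → t x = x := fun x => Equiv.swap_apply_of_ne_of_ne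
  have a1 := hfix i hi
  have a2 := hfix j (by omega)
  have a3 : z i ≠ j := by intro h; have := z2 i; rw [h] at this; omega
  have a4 : z j ≠ i := by intro h; have := z2 j; rw [h] at this; omega
  have e1 : (t * z) i < (t * z) j := by
    simp only [Equiv.Perm.mul_apply]
    rw [tn _ a1 a3, tn _ a4 a2]; exact hlt
  have e0 : (t * z) 0 = 0 := by
    simp only [Equiv.Perm.mul_apply, hz.1]; exact tn 0 (by omega) (by omega)
  refine (rnk_swap e0 hi hij e1 p q).trans ?_
  rw [rnk_inv (w := t * z), mul_inv_rev, zi, (by rw [ht, Equiv.swap_inv] : t⁻¹ = t)]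
  refine (rnk_swap hz.1 hi hij hlt q p).trans ?_
  rw [rnk_inv (w := z), zi]

theorem ell_conj {z : Equiv.Perm ℕ} (hz : z ∈ IFPFInfty) {i j : ℕ} (hi : 1 ≤ i) (hij : i < j)
    (hlt : z i < z j) :
    ellFpf z ≤ ellFpf (Equiv.swap i j * z * Equiv.swap i j) := by
  have z2 := invol_apply hz
  have zi := invol_inv hz
  have hfix := hz.2.1
  have hy := conj_mem hz hi hij
  obtain ⟨N1, hN1⟩ := hz.2.2.2
  obtain ⟨N2, hN2⟩ := hy.2.2.2
  set N := 2 * (N1 + N2 + j) with hN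
  obtain ⟨pz, ez⟩ := fpf_facts hz z2 (N := N) (by omega) (fun x hx => hN1 x (by omega))
  obtain ⟨py, ey⟩ := fpf_facts hy (invol_apply hy) (N := N) (by omega)
    (fun x hx => hN2 x (by omega))
  have tn : ∀ x, x ≠ i → x ≠ j → Equiv.swap i j x = x :=
    fun x => Equiv.swap_apply_of_ne_of_ne
  have a1 := hfix i hi
  have a2 := hfix j (by omega)
  have a3 : z i ≠ j := by intro h; have := z2 i; rw [h] at this; omega
  have a4 : z j ≠ i := by intro h; have := z2 j; rw [h] at this; omega
  have e1 : (Equiv.swap i j * z) i < (Equiv.swap i j * z) j := by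
    simp only [Equiv.Perm.mul_apply]
    rw [tn _ a1 a3, tn _ a4 a2]; exact hlt
  have tb : ∀ x, 1 ≤ x → x ≤ N → 1 ≤ Equiv.swap i j x ∧ Equiv.swap i j x ≤ N := by
    intro x h1 h2
    rw [Equiv.swap_apply_def]
    split_ifs <;> omega
  have s1 := InvN_swap (N := N) hi hij (by omega) hlt
  have s2 := InvN_inv (N := N) (w := z * Equiv.swap i j) (fun x h1 h2 => by
    have := tb x h1 h2
    simp only [Equiv.Perm.mul_apply]
    exact pz _ this.1 this.2)
  rw [mul_inv_rev, zi, Equiv.swap_inv] at s2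
  have s3 := InvN_swap (N := N) hi hij (by omega) e1
  omega

theorem step_facts {a b : Equiv.Perm ℕ} (ha : a ∈ IFPFInfty) {i j : ℕ} (hi : 1 ≤ i)
    (hij : i < j) (hb : b = Equiv.swap i j * a * Equiv.swap i j)
    (hell : ellFpf b = ellFpf a + 1) :
    b ∈ IFPFInfty ∧ ∀ p q, rnk b p q ≤ rnk a p q := by
  have hbm : b ∈ IFPFInfty := hb ▸ conj_mem ha hi hij
  refine ⟨hbm, ?_⟩
  have z2 := invol_apply ha
  rcases Nat.lt_trichotomy (a i) (a j) with h | h | h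
  · intro p q; rw [hb]; exact rnk_conj ha hi hij h p q
  · have := a.injective h; omega
  · exfalso
    have tn : ∀ x, x ≠ i → x ≠ j → Equiv.swap i j x = x :=
      fun x => Equiv.swap_apply_of_ne_of_ne
    by_cases h3 : a i = j
    · have : b = a := by
        have h4 : a j = i := by rw [← h3, z2]
        have : Equiv.swap i j * a = a * Equiv.swap (a⁻¹ i) (a⁻¹ j) := by
          rw [Equiv.mul_swap_eq_swap_mul]; simp
        rw [hb, this, invol_inv ha, h3, h4, Equiv.swap_comm j i, mul_assoc,
          Equiv.swap_mul_self, mul_one]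
      rw [this] at hell; omega
    · have a1 := ha.2.1 i hi
      have a2 := ha.2.1 j (by omega)
      have a4 : a j ≠ i := by intro h; apply h3; have := z2 j; rw [h] at this; exact this
      have b1 : b i = a j := by
        rw [hb]; simp only [Equiv.Perm.mul_apply, Equiv.swap_apply_left]
        exact tn _ a4 a2
      have b2 : b j = a i := by
        rw [hb]; simp only [Equiv.Perm.mul_apply, Equiv.swap_apply_right]
        exact tn _ a1 h3
      have := ell_conj hbm hi hij (by rw [b1, b2]; exact h)
      have e : Equiv.swap i j * b * Equiv.swap i j = a := by
        rw [hb]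
        have tt := Equiv.swap_mul_self i j
        calc _ = (Equiv.swap i j * Equiv.swap i j) * a * (Equiv.swap i j * Equiv.swap i j) := by
              simp only [mul_assoc]
          _ = a := by rw [tt, one_mul, mul_one]
      rw [e] at this
      omega

theorem bruhat_facts {y z : Equiv.Perm ℕ} (hy : y ∈ IFPFInfty) (h : fpfBruhatLe y z) :
    z ∈ IFPFInfty ∧ (∀ p q, rnk z p q ≤ rnk y p q) ∧ (ellFpf z ≤ ellFpf y → y = z) ∧
      ellFpf y ≤ ellFpf z := by
  unfold fpfBruhatLe at h
  induction h with
  | refl => exact ⟨hy, fun _ _ => le_rfl, fun _ => rfl, le_rfl⟩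
  | tail _ hs ih =>
    obtain ⟨i, j, h1, h2, h3, h4⟩ := hs
    obtain ⟨i1, i2, i3, i4⟩ := ih
    obtain ⟨s1, s2⟩ := step_facts i1 h1 h2 h3 h4
    exact ⟨s1, fun p q => (s2 p q).trans (i2 p q), fun _ => by omega, by omega⟩

theorem exists_minimal (P : Equiv.Perm ℕ → Prop) (n : ℕ) (z : Equiv.Perm ℕ)
    (hz : z ∈ FPFIn n) (hP : P z) :
    ∃ y ∈ FPFIn n, P y ∧ (∀ p q, rnk z p q ≤ rnk y p q) ∧
      ∀ x ∈ FPFIn n, P x → fpfBruhatLe x y → x = y := by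
  classical
  have hex : ∃ m, ∃ y ∈ FPFIn n, P y ∧ fpfBruhatLe y z ∧ ellFpf y = m :=
    ⟨_, z, hz, hP, Relation.ReflTransGen.refl, rfl⟩
  obtain ⟨y, hy, hPy, hyz, hm⟩ := Nat.find_spec hex
  refine ⟨y, hy, hPy, (bruhat_facts hy.1 hyz).2.1, fun x hx hPx hxy => ?_⟩
  refine (bruhat_facts hx.1 hxy).2.2.1 ?_
  rw [hm]
  exact Nat.find_min' hex ⟨x, hx, hPx, Relation.ReflTransGen.trans hxy hyz, rfl⟩

/-- symmetrized support of a monomial -/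
def SM {n : ℕ} (m : SSVar n →₀ ℕ) (x y : ℕ) : Prop :=
  ∃ v : SSVar n, m v ≠ 0 ∧ ((x = (v.1.1 : ℕ) + 1 ∧ y = (v.1.2 : ℕ) + 1) ∨
    (x = (v.1.2 : ℕ) + 1 ∧ y = (v.1.1 : ℕ) + 1))

theorem SM_symm {n : ℕ} (m : SSVar n →₀ ℕ) (x y : ℕ) (h : SM m x y) : SM m y x := by
  obtain ⟨v, hv, h | h⟩ := h
  · exact ⟨v, hv, Or.inr ⟨h.2, h.1⟩⟩
  · exact ⟨v, hv, Or.inl ⟨h.2, h.1⟩⟩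

theorem SM_irrefl {n : ℕ} (m : SSVar n →₀ ℕ) (x : ℕ) : ¬ SM m x x := by
  rintro ⟨v, hv, h⟩
  have := Fin.lt_def.1 v.2
  omega

/-- variables occurring in `u^ss_{AB}` -/
def ussVars {n : ℕ} (A B : Finset (Fin n)) (h : A.card = B.card) : Finset (SSVar n) :=
  Finset.univ.filter (fun v : SSVar n => ∃ t : Fin A.card,
          (A.orderEmbOfFin rfl t = v.1.1 ∧ B.orderEmbOfFin h.symm t.rev = v.1.2) ∨
          (A.orderEmbOfFin rfl t = v.1.2 ∧ B.orderEmbOfFin h.symm t.rev = v.1.1))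

/-- exponents of the generators -/
def genExp (n : ℕ) (r : ℕ → ℕ → ℕ) : Set (SSVar n →₀ ℕ) :=
  {e | ∃ (i j : ℕ) (A B : Finset (Fin n)) (h : A.card = B.card),
    1 ≤ j ∧ j ≤ i ∧ i ≤ n ∧
    (∀ a ∈ A, (a : ℕ) + 1 ≤ i) ∧ (∀ b ∈ B, (b : ℕ) + 1 ≤ j) ∧
    A.card = r i j + 1 ∧
    (¬ ∃ t : Fin A.card, (A.orderEmbOfFin rfl t : Fin n) = B.orderEmbOfFin h.symm t.rev) ∧
    e = ∑ v ∈ ussVars A B h, Finsupp.single v 1}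

theorem ussMon_eq (K : Type*) [CommRing K] {n : ℕ} (A B : Finset (Fin n))
    (h : A.card = B.card)
    (hd : ¬ ∃ t : Fin A.card, (A.orderEmbOfFin rfl t : Fin n) = B.orderEmbOfFin h.symm t.rev) :
    ussMon K A B = MvPolynomial.monomial (∑ v ∈ ussVars A B h, Finsupp.single v 1) (1 : K) := by
  unfold ussMon
  rw [dif_pos h, if_neg hd, MvPolynomial.monomial_sum_one]
  rfl

theorem Jss_eq (K : Type*) [CommRing K] (n : ℕ) (r : ℕ → ℕ → ℕ) :
    JssIdealOfTable K n r =
      Ideal.span ((fun s => MvPolynomial.monomial s (1 : K)) '' genExp n r) := by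
  apply le_antisymm
  · unfold JssIdealOfTable
    rw [Ideal.span_le]
    rintro g ⟨i, j, A, B, h1, h2, h3, h4, h5, h6, h7, rfl⟩
    have h : A.card = B.card := h6.trans h7.symm
    by_cases hd : ∃ t : Fin A.card,
        (A.orderEmbOfFin rfl t : Fin n) = B.orderEmbOfFin h.symm t.rev
    · have : ussMon K A B = 0 := by
        unfold ussMon
        rw [dif_pos h, if_pos hd]
      rw [this]
      exact Ideal.zero_mem _
    · rw [ussMon_eq K A B h hd]
      exact Ideal.subset_span ⟨_, ⟨i, j, A, B, h, h1, h2, h3, h4, h5, h6, hd, rfl⟩, rfl⟩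
  · rw [Ideal.span_le]
    rintro _ ⟨e, ⟨i, j, A, B, h, h1, h2, h3, h4, h5, h6, hd, rfl⟩, rfl⟩
    exact Ideal.subset_span ⟨i, j, A, B, h1, h2, h3, h4, h5, h6, h ▸ h6,
      (ussMon_eq K A B h hd).symm⟩

theorem sum_single_le {σ : Type*} (s : Finset σ) (m : σ →₀ ℕ) :
    (∑ v ∈ s, Finsupp.single v 1) ≤ m ↔ ∀ v ∈ s, m v ≠ 0 := by
  classical
  have key : ∀ w, (∑ v ∈ s, Finsupp.single v 1 : σ →₀ ℕ) w = if w ∈ s then 1 else 0 := by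
    intro w
    rw [Finsupp.finset_sum_apply]
    simp [Finsupp.single_apply]
  rw [Finsupp.le_def]
  constructor
  · intro h v hv
    have := h v
    rw [key, if_pos hv] at this
    omega
  · intro h v
    rw [key]
    split_ifs with hv
    · have := h v hv; omega
    · omega

theorem genExp_iff {n : ℕ} (r : ℕ → ℕ → ℕ) (m : SSVar n →₀ ℕ) :
    (∃ e ∈ genExp n r, e ≤ m) ↔
      ∃ i j, 1 ≤ j ∧ j ≤ i ∧ i ≤ n ∧ SChain (SM m) i j (r i j + 1) := by
  constructor
  · rintro ⟨_, ⟨i, j, A, B, h, h1, h2, h3, h4, h5, h6, hd, rfl⟩, hle⟩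
    rw [sum_single_le] at hle
    refine ⟨i, j, h1, h2, h3, ?_⟩
    rw [← h6]
    refine ⟨fun s => if hs : s < A.card then (A.orderEmbOfFin rfl ⟨s, hs⟩ : ℕ) + 1 else 0,
      fun s => if hs : s < A.card then
        (B.orderEmbOfFin h.symm (Fin.rev ⟨s, hs⟩) : ℕ) + 1 else 0, fun s hs => ?_, fun s hs => ?_⟩
    · simp only [dif_pos hs]
      refine ⟨?_, by omega, by omega, h4 _ (Finset.orderEmbOfFin_mem _ _ _),
        h5 _ (Finset.orderEmbOfFin_mem _ _ _)⟩
      have hne : (A.orderEmbOfFin rfl ⟨s, hs⟩ : Fin n) ≠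
        B.orderEmbOfFin h.symm (Fin.rev ⟨s, hs⟩) := fun he => hd ⟨⟨s, hs⟩, he⟩
      rcases lt_or_gt_of_ne hne with hl | hl
      · refine ⟨⟨(_, _), hl⟩, hle _ ?_, Or.inr ⟨rfl, rfl⟩⟩
        exact Finset.mem_filter.2 ⟨Finset.mem_univ _, ⟨s, hs⟩, Or.inr ⟨rfl, rfl⟩⟩
      · refine ⟨⟨(_, _), hl⟩, hle _ ?_, Or.inl ⟨rfl, rfl⟩⟩
        exact Finset.mem_filter.2 ⟨Finset.mem_univ _, ⟨s, hs⟩, Or.inl ⟨rfl, rfl⟩⟩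
    · have hs' : s < A.card := by omega
      simp only [dif_pos hs, dif_pos hs']
      have e1 : A.orderEmbOfFin rfl ⟨s, hs'⟩ < A.orderEmbOfFin rfl ⟨s + 1, hs⟩ :=
        (A.orderEmbOfFin rfl).strictMono (Fin.mk_lt_mk.2 (by omega))
      have e2 : B.orderEmbOfFin h.symm (Fin.rev ⟨s + 1, hs⟩) <
          B.orderEmbOfFin h.symm (Fin.rev ⟨s, hs'⟩) :=
        (B.orderEmbOfFin h.symm).strictMono (Fin.rev_lt_rev.2 (Fin.mk_lt_mk.2 (by omega)))
      rw [Fin.lt_def] at e1 e2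
      omega
  · rintro ⟨i, j, h1, h2, h3, a, b, c1, c2⟩
    set k := r i j + 1 with hk
    have c3 := chain_pair c2
    have bda : ∀ t : Fin k, a t - 1 < n := fun t => by
      have := c1 t t.2; omega
    have bdb : ∀ t : Fin k, b t - 1 < n := fun t => by
      have := c1 t t.2; omega
    let fa : Fin k → Fin n := fun t => ⟨a t - 1, bda t⟩
    let fb : Fin k → Fin n := fun t => ⟨b (t.rev : Fin k) - 1, bdb t.rev⟩
    have ma : StrictMono fa := by
      intro s t hst
      have := c3 t s hst t.2
      have := c1 s s.2
      exact Fin.mk_lt_mk.2 (by omega)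
    have mb : StrictMono fb := by
      intro s t hst
      have h4 : (t.rev : Fin k) < s.rev := Fin.rev_lt_rev.2 hst
      have h5 := c3 _ _ h4 s.rev.2
      have h6 := c1 _ t.rev.2
      have h7 := c1 _ s.rev.2
      change b (s.rev : Fin k) - 1 < b (t.rev : Fin k) - 1
      omega
    set A := Finset.univ.image fa with hA
    set B := Finset.univ.image fb with hB
    have cA : A.card = k := by
      rw [hA, Finset.card_image_of_injective _ ma.injective]; simp
    have cB : B.card = k := by
      rw [hB, Finset.card_image_of_injective _ mb.injective]; simp
    have oA := Finset.orderEmbOfFin_unique cA (f := fa)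
      (fun x => Finset.mem_image_of_mem _ (Finset.mem_univ _)) ma
    have oB := Finset.orderEmbOfFin_unique cB (f := fb)
      (fun x => Finset.mem_image_of_mem _ (Finset.mem_univ _)) mb
    have h : A.card = B.card := cA.trans cB.symm
    have eA : ∀ t : Fin A.card, ((A.orderEmbOfFin rfl t : Fin n) : ℕ) + 1 = a t := by
      intro t
      have e : A.orderEmbOfFin rfl t = A.orderEmbOfFin cA (Fin.cast cA t) := by
        rw [Finset.orderEmbOfFin_eq_orderEmbOfFin_iff]; rfl
      rw [e, ← oA]
      have := c1 t (by have := t.2; omega)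
      change a t - 1 + 1 = a t
      omega
    have eB : ∀ t : Fin A.card, ((B.orderEmbOfFin h.symm t.rev : Fin n) : ℕ) + 1 = b t := by
      intro t
      have e : B.orderEmbOfFin h.symm t.rev = B.orderEmbOfFin cB (Fin.cast cA t).rev := by
        rw [Finset.orderEmbOfFin_eq_orderEmbOfFin_iff]
        simp only [Fin.val_rev, Fin.val_cast]
        omega
      rw [e, ← oB]
      have := c1 t (by have := t.2; omega)
      change b ((Fin.cast cA t).rev.rev : Fin k) - 1 + 1 = b t
      rw [Fin.rev_rev]
      simp only [Fin.val_cast]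
      omega
    refine ⟨_, ⟨i, j, A, B, h, h1, h2, h3, ?_, ?_, cA, ?_, rfl⟩, ?_⟩
    · intro x hx
      obtain ⟨t, -, rfl⟩ := Finset.mem_image.1 hx
      have := c1 t t.2
      change a t - 1 + 1 ≤ i
      omega
    · intro x hx
      obtain ⟨t, -, rfl⟩ := Finset.mem_image.1 hx
      have := c1 _ t.rev.2
      change b (t.rev : Fin k) - 1 + 1 ≤ j
      omega
    · rintro ⟨t, ht⟩
      have e1 := eA t
      have e2 := eB t
      rw [ht] at e1
      have h4 := (c1 t (by have := t.2; omega)).1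
      rw [← e1, ← e2] at h4
      exact SM_irrefl _ _ h4
    · rw [sum_single_le]
      intro v hv
      obtain ⟨-, t, ht⟩ := Finset.mem_filter.1 hv
      have e1 := eA t
      have e2 := eB t
      obtain ⟨w, hw, hw'⟩ := (c1 t (by have := t.2; omega)).1
      have hwlt := Fin.lt_def.1 w.2
      have hvlt := Fin.lt_def.1 v.2
      have : v = w := by
        apply Subtype.ext
        apply Prod.ext
        · apply Fin.ext
          rcases ht with ⟨p, q⟩ | ⟨p, q⟩ <;> rw [p] at e1 <;> rw [q] at e2 <;> omega
        · apply Fin.ext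
          rcases ht with ⟨p, q⟩ | ⟨p, q⟩ <;> rw [p] at e1 <;> rw [q] at e2 <;> omega
      rw [this]; exact hw

theorem mem_Jss (K : Type*) [CommRing K] (n : ℕ) (r : ℕ → ℕ → ℕ)
    (f : MvPolynomial (SSVar n) K) :
    f ∈ JssIdealOfTable K n r ↔ ∀ m ∈ f.support,
      ∃ i j, 1 ≤ j ∧ j ≤ i ∧ i ≤ n ∧ SChain (SM m) i j (r i j + 1) := by
  rw [Jss_eq, MvPolynomial.mem_ideal_span_monomial_image]
  simp only [genExp_iff]

/-- For a symmetric rank table `r`, the ideal `J^ss_r` is the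
intersection of the ideals `J^ss_z` over all `z ∈ FPF_n(I_n)` that are Bruhat-minimal
among those with `r_z(i,j) ≤ r(i,j)` for all `i, j ∈ [n]`. -/
theorem statement8 (K : Type*) [Field K] [IsAlgClosed K] (n : ℕ) (hn : 1 ≤ n)
    (r : ℕ → ℕ → ℕ) (hr0 : ∀ i, r i 0 = 0) (hr0' : ∀ j, r 0 j = 0)
    (hsym : ∀ i j, r i j = r j i) :
    JssIdealOfTable K n r =
      ⨅ z ∈ {z : Equiv.Perm ℕ | z ∈ FPFIn n ∧
          (∀ i j : ℕ, 1 ≤ i → i ≤ n → 1 ≤ j → j ≤ n → rnk z i j ≤ r i j) ∧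
          ∀ y ∈ FPFIn n,
            (∀ i j : ℕ, 1 ≤ i → i ≤ n → 1 ≤ j → j ≤ n → rnk y i j ≤ r i j) →
            fpfBruhatLe y z → y = z},
        JssIdeal K n z := by
  apply le_antisymm
  · refine le_iInf₂ fun z hz => ?_
    obtain ⟨-, hz, -⟩ := hz
    intro f hf
    unfold JssIdeal
    rw [mem_Jss] at hf ⊢
    intro m hm
    obtain ⟨i, j, h1, h2, h3, h4⟩ := hf m hm
    refine ⟨i, j, h1, h2, h3, h4.mono le_rfl le_rfl ?_⟩
    have := hz i j (by omega) h3 h1 (by omega)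
    omega
  · intro f hf
    rw [mem_Jss]
    intro m hm
    by_contra hcon
    have hS := SM_symm m
    have hle : ∀ i j, 1 ≤ j → j ≤ i → i ≤ n → rho (SM m) i j ≤ r i j := by
      intro i j h1 h2 h3
      by_contra h
      exact hcon ⟨i, j, h1, h2, h3, le_rho.1 (by omega)⟩
    have hle' : ∀ i j, 1 ≤ i → i ≤ n → 1 ≤ j → j ≤ n → rho (SM m) i j ≤ r i j := by
      intro i j h1 h2 h3 h4
      rcases le_total j i with h | h
      · exact hle i j h3 h h2
      · rw [rho_symm hS, hsym]; exact hle j i h1 h h4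
    obtain ⟨z, hz, hzr⟩ := exists_fpf n (rho (SM m)) (rho_zero _) (rho_symm hS) rho_mono rho_lip
      (rho_super hS) (rho_even hS (SM_irrefl m))
    obtain ⟨y, hy, hPy, hyr, hmin⟩ := exists_minimal
      (fun z => ∀ i j : ℕ, 1 ≤ i → i ≤ n → 1 ≤ j → j ≤ n → rnk z i j ≤ r i j) n z hz
      (fun i j h1 h2 h3 h4 => by rw [hzr i j h2 h4]; exact hle' i j h1 h2 h3 h4)
    have hfy : f ∈ JssIdeal K n y := by
      have := (Submodule.mem_iInf _).1 hf y
      exact (Submodule.mem_iInf _).1 this ⟨hy, hPy, hmin⟩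
    unfold JssIdeal at hfy
    rw [mem_Jss] at hfy
    obtain ⟨i, j, h1, h2, h3, h4⟩ := hfy m hm
    have a1 := le_rho.2 h4
    have a2 := hyr i j
    rw [hzr i j h3 (by omega)] at a2
    omega

end Paper
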